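/- Fix a real α with 1 < α < 3/2. For even integers n ≥ 4, define λ_k(α,n) = 2 ∑_{j=1}^{n−1} j^{−α} cos(2πkj/n), λ̃_k(α,n) = (λ_k(α,n) − λ_{n/2}(α,n)) / (λ_0(α,n) − λ_{n/2}(α,n)), S_q(α,n) = (1/n) ∑_{k=1}^{n−1} (1 − λ̃_k(α,n))^{−q}, and the asymptotic fidelity F(α,n) = S_1(α,n)^2 / S_2(α,n). Then F(α,n) converges as even n → ∞ to a finite strictly positive limit F_∞(α) > 0. -/

import Mathlib

/-- Eigenvalues of the long-range circulant Hamiltonian. -/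
noncomputable def lam (α : ℝ) (n k : ℕ) : ℝ :=
  2 * ∑ j ∈ Finset.Icc 1 (n - 1), (j : ℝ) ^ (-α) * Real.cos (2 * Real.pi * k * j / n)

/-- Rescaled eigenvalues `λ̃_k = (λ_k - λ_{n/2})/(λ_0 - λ_{n/2})` for even `n`. -/
noncomputable def lamT (α : ℝ) (n k : ℕ) : ℝ :=
  (lam α n k - lam α n (n / 2)) / (lam α n 0 - lam α n (n / 2))

/-- `S_q(α,n) = (1/n) ∑_{k=1}^{n-1} (1 - λ̃_k)^{-q}`. -/
noncomputable def Sq (q : ℕ) (α : ℝ) (n : ℕ) : ℝ :=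
  (1 / (n : ℝ)) * ∑ k ∈ Finset.Icc 1 (n - 1), (1 - lamT α n k) ^ (-(q : ℤ))

open Filter Topology MeasureTheory

/-- Symbol partial sums. -/
noncomputable def GG (α : ℝ) (n : ℕ) (y : ℝ) : ℝ :=
  2 * ∑ j ∈ Finset.Icc 1 (n - 1), (j : ℝ) ^ (-α) * (1 - Real.cos (2 * Real.pi * y * j))

theorem lam_sub (α : ℝ) (n k : ℕ) : lam α n 0 - lam α n k = GG α n ((k : ℝ) / n) := by
  unfold lam GG
  rw [← mul_sub, ← Finset.sum_sub_distrib]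
  congr 1
  apply Finset.sum_congr rfl
  intro j _
  have : 2 * Real.pi * (k : ℝ) * j / n = 2 * Real.pi * ((k : ℝ) / n) * j := by ring
  rw [this]
  simp
  ring

theorem sum_sq_lower (J : ℕ) : (J : ℝ) ^ 3 / 3 ≤ ∑ j ∈ Finset.Icc 1 J, (j : ℝ) ^ 2 := by
  induction J with
  | zero => simp
  | succ J ih =>
    rw [Finset.sum_Icc_succ_top (by omega)]
    push_cast
    have : (0 : ℝ) ≤ J := by positivity
    nlinarith

theorem lower_half (α : ℝ) (h1 : 1 < α) (m : ℝ) (hm : 0 < m) (hm2 : m ≤ 1 / 2) (N : ℕ)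
    (hN : 1 / (2 * m) ≤ N) :
    m ^ (α - 1) / 24 ≤ ∑ j ∈ Finset.Icc 1 N, (j : ℝ) ^ (-α) * (1 - Real.cos (2 * Real.pi * m * j)) := by
  set J := ⌊1 / (2 * m)⌋₊ with hJ
  have hpos : 0 < 1 / (2 * m) := by positivity
  have hJle : (J : ℝ) ≤ 1 / (2 * m) := Nat.floor_le hpos.le
  have hone : 1 ≤ 1 / (2 * m) := by
    rw [le_div_iff₀ (by positivity)]; linarith
  have hJ1 : 1 ≤ J := Nat.le_floor (by simpa using hone)
  have hJ1' : (1 : ℝ) ≤ J := by exact_mod_cast hJ1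
  have hJlt : 1 / (2 * m) < J + 1 := Nat.lt_floor_add_one _
  have hJge : 1 / (4 * m) ≤ J := by
    have : 1 / (4 * m) = (1 / (2 * m)) / 2 := by field_simp; norm_num
    rw [this]; linarith
  have hJN : J ≤ N := by
    have : (J : ℝ) ≤ N := hJle.trans hN
    exact_mod_cast this
  have hsub : Finset.Icc 1 J ⊆ Finset.Icc 1 N := Finset.Icc_subset_Icc_right hJN
  have hnn : ∀ j : ℕ, 0 ≤ (j : ℝ) ^ (-α) * (1 - Real.cos (2 * Real.pi * m * j)) := fun j =>
    mul_nonneg (by positivity) (by linarith [Real.cos_le_one (2 * Real.pi * m * j)])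
  refine le_trans ?_ (Finset.sum_le_sum_of_subset_of_nonneg hsub (fun j _ _ => hnn j))
  have hterm : ∀ j ∈ Finset.Icc 1 J, m ^ α * (8 * m ^ 2) * (j : ℝ) ^ 2 ≤
      (j : ℝ) ^ (-α) * (1 - Real.cos (2 * Real.pi * m * j)) := by
    intro j hj
    rw [Finset.mem_Icc] at hj
    have hj1 : (1 : ℝ) ≤ j := by exact_mod_cast hj.1
    have hj2 : (j : ℝ) ≤ 1 / (2 * m) := le_trans (by exact_mod_cast hj.2) hJle
    have hmj : m * j ≤ 1 / 2 := by
      rw [le_div_iff₀ (by positivity)] at hj2; linarith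
    have a : m ^ α ≤ (j : ℝ) ^ (-α) := by
      rw [Real.rpow_neg (by positivity), ← Real.inv_rpow (by positivity)]
      apply Real.rpow_le_rpow hm.le _ (by linarith)
      rw [le_inv_comm₀ hm (by positivity)]
      rw [← one_div, le_div_iff₀ hm]; linarith
    have b : 8 * m ^ 2 * (j : ℝ) ^ 2 ≤ 1 - Real.cos (2 * Real.pi * m * j) := by
      have hc := Real.cos_le_one_sub_mul_cos_sq (x := 2 * Real.pi * m * j) (by
        rw [abs_of_nonneg (by positivity)]
        nlinarith [Real.pi_pos])
      have : 2 / Real.pi ^ 2 * (2 * Real.pi * m * j) ^ 2 = 8 * m ^ 2 * (j : ℝ) ^ 2 := by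
        have := Real.pi_pos.ne'
        field_simp; ring
      linarith
    calc _ = m ^ α * (8 * m ^ 2 * (j : ℝ) ^ 2) := by ring
      _ ≤ _ := mul_le_mul a b (by positivity) (by positivity)
  refine le_trans ?_ (Finset.sum_le_sum hterm)
  rw [← Finset.mul_sum]
  have h3 : (1 / (4 * m)) ^ 3 / 3 ≤ ∑ j ∈ Finset.Icc 1 J, (j : ℝ) ^ 2 := by
    refine le_trans ?_ (sum_sq_lower J)
    gcongr
  calc m ^ (α - 1) / 24 = m ^ α * (8 * m ^ 2) * ((1 / (4 * m)) ^ 3 / 3) := by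
        rw [Real.rpow_sub_one hm.ne']; field_simp; norm_num
    _ ≤ _ := by gcongr

theorem GG_symm (α : ℝ) (n : ℕ) (y : ℝ) : GG α n (1 - y) = GG α n y := by
  unfold GG
  congr 1
  apply Finset.sum_congr rfl
  intro j _
  congr 2
  have : 2 * Real.pi * (1 - y) * j = j * (2 * Real.pi) - 2 * Real.pi * y * j := by ring
  rw [this, Real.cos_nat_mul_two_pi_sub]

theorem GG_lower (α : ℝ) (h1 : 1 < α) (n : ℕ) (hn : 2 ≤ n) (y : ℝ) (hy : 1 / (n : ℝ) ≤ y)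
    (hy2 : y ≤ 1 - 1 / n) : (min y (1 - y)) ^ (α - 1) / 12 ≤ GG α n y := by
  have hn' : (2 : ℝ) ≤ n := by exact_mod_cast hn
  have key : ∀ m : ℝ, 1 / (n : ℝ) ≤ m → m ≤ 1 / 2 → m ^ (α - 1) / 12 ≤ GG α n m := by
    intro m hm hm2
    have hm0 : 0 < m := lt_of_lt_of_le (by positivity) hm
    have := lower_half α h1 m hm0 hm2 (n - 1) (by
      rw [Nat.cast_sub (by omega)]
      push_cast
      rw [div_le_iff₀ (by positivity)] at hm ⊢
      nlinarith)
    unfold GG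
    linarith
  rcases le_total y (1 / 2) with h | h
  · rw [min_eq_left (by linarith)]
    exact key y hy h
  · rw [min_eq_right (by linarith), ← GG_symm]
    exact key _ (by linarith) (by linarith)

theorem GG_upper (α : ℝ) (h1 : 1 < α) (n : ℕ) (y : ℝ) :
    GG α n y ≤ 4 * ∑' j : ℕ, (j : ℝ) ^ (-α) := by
  have hs : Summable (fun j : ℕ => (j : ℝ) ^ (-α)) := Real.summable_nat_rpow.2 (by linarith)
  have h2 := hs.sum_le_tsum (Finset.Icc 1 (n - 1)) (fun j _ => by positivity)
  have h3 : ∑ j ∈ Finset.Icc 1 (n - 1), (j : ℝ) ^ (-α) * (1 - Real.cos (2 * Real.pi * y * j)) ≤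
      ∑ j ∈ Finset.Icc 1 (n - 1), (j : ℝ) ^ (-α) * 2 := by
    apply Finset.sum_le_sum
    intro j _
    have := Real.neg_one_le_cos (2 * Real.pi * y * j)
    gcongr
    linarith
  rw [← Finset.sum_mul] at h3
  unfold GG
  linarith

theorem GG_tendsto (α : ℝ) (h1 : 1 < α) (x : ℝ) (y : ℕ → ℝ) (hy : Tendsto y atTop (𝓝 x)) :
    Tendsto (fun n => GG α n (y n)) atTop
      (𝓝 (2 * ∑' j : ℕ, (j : ℝ) ^ (-α) * (1 - Real.cos (2 * Real.pi * x * j)))) := by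
  unfold GG
  apply Tendsto.const_mul
  have hs : Summable (fun j : ℕ => (j : ℝ) ^ (-α) * 2) :=
    (Real.summable_nat_rpow.2 (by linarith)).mul_right 2
  have := tendsto_tsum_of_dominated_convergence (𝓕 := atTop)
    (f := fun n (j : ℕ) => if j ∈ Finset.Icc 1 (n - 1) then
      (j : ℝ) ^ (-α) * (1 - Real.cos (2 * Real.pi * y n * j)) else 0)
    (g := fun j : ℕ => (j : ℝ) ^ (-α) * (1 - Real.cos (2 * Real.pi * x * j))) hs
    (by
      intro j
      have hlim : Tendsto (fun n => (j : ℝ) ^ (-α) * (1 - Real.cos (2 * Real.pi * y n * j)))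
          atTop (𝓝 ((j : ℝ) ^ (-α) * (1 - Real.cos (2 * Real.pi * x * j)))) := by
        have hc : Continuous fun z : ℝ =>
          (j : ℝ) ^ (-α) * (1 - Real.cos (2 * Real.pi * z * j)) := by fun_prop
        exact (hc.tendsto x).comp hy
      refine hlim.congr' ?_
      filter_upwards [eventually_ge_atTop (j + 1)] with n hn
      rcases Nat.eq_zero_or_pos j with h0 | h0
      · subst h0; simp
      · rw [if_pos (Finset.mem_Icc.2 ⟨h0, by omega⟩)])
    (by
      refine Eventually.of_forall fun n j => ?_
      split_ifs
      · rw [Real.norm_of_nonneg (mul_nonneg (by positivity)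
          (by linarith [Real.cos_le_one (2 * Real.pi * y n * j)]))]
        have := Real.neg_one_le_cos (2 * Real.pi * y n * j)
        gcongr
        linarith
      · simp; positivity)
  refine this.congr fun n => ?_
  rw [tsum_eq_sum (s := Finset.Icc 1 (n - 1))]
  · exact Finset.sum_congr rfl fun j hj => if_pos hj
  · intro j hj; exact if_neg hj

theorem sum_eq_integral (f : ℕ → ℝ) (n : ℕ) (hn : 1 ≤ n) :
    1 / (n : ℝ) * ∑ k ∈ Finset.range n, f k = ∫ x in (0 : ℝ)..1, f ⌊(n : ℝ) * x⌋₊ := by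
  have hn0 : (n : ℝ) ≠ 0 := by positivity
  rw [intervalIntegral.integral_comp_mul_left (fun t => f ⌊t⌋₊) hn0]
  have hae : ∀ k : ℕ, Set.EqOn (fun t : ℝ => f ⌊t⌋₊) (fun _ => f k) (Set.Ioo (k : ℝ) ((k + 1 : ℕ) : ℝ)) := by
    intro k t ht
    have : ⌊t⌋₊ = k := by
      rw [Nat.floor_eq_iff (le_trans (by positivity) ht.1.le)]
      exact ⟨ht.1.le, by simpa using ht.2⟩
    simp [this]
  have hle : ∀ k : ℕ, (k : ℝ) ≤ ((k + 1 : ℕ) : ℝ) := fun k => by push_cast; linarith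
  have h2 := intervalIntegral.sum_integral_adjacent_intervals (μ := volume)
    (f := fun t : ℝ => f ⌊t⌋₊)
    (a := fun k : ℕ => (k : ℝ)) (n := n) (by
      intro k _
      rw [intervalIntegrable_iff_integrableOn_Ioo_of_le (hle k)]
      exact IntegrableOn.congr_fun (by simp) (hae k).symm measurableSet_Ioo)
  simp only [Nat.cast_zero] at h2
  rw [mul_zero, mul_one, ← h2, one_div, smul_eq_mul]
  congr 1
  apply Finset.sum_congr rfl
  intro k _
  rw [intervalIntegral.integral_of_le (hle k), integral_Ioc_eq_integral_Ioo,
    setIntegral_congr_fun measurableSet_Ioo (hae k)]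
  simp

theorem T_tendsto (α : ℝ) (h1 : 1 < α) (q : ℕ) (hq : 1 ≤ q) (hs : (α - 1) * q < 1) :
    ∃ L : ℝ, 0 < L ∧ Tendsto (fun n : ℕ => 1 / (n : ℝ) * ∑ k ∈ Finset.Icc 1 (n - 1),
      (GG α n ((k : ℝ) / n) ^ q)⁻¹) atTop (𝓝 L) := by
  set s := (α - 1) * q with hsdef
  set g : ℝ → ℝ := fun x => 2 * ∑' j : ℕ, (j : ℝ) ^ (-α) * (1 - Real.cos (2 * Real.pi * x * j))
  set f : ℕ → ℕ → ℝ := fun n k => (GG α n ((k : ℝ) / n) ^ q)⁻¹ with hf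
  have hf0 : ∀ n, f n 0 = 0 := by
    intro n
    simp [hf, GG]; omega
  -- bounds on the floor
  have hfl : ∀ n : ℕ, ∀ x ∈ Set.Ioo (0 : ℝ) 1, 2 ≤ n → 1 ≤ ⌊(n : ℝ) * x⌋₊ →
      (min (x / 2) (1 - x)) ^ (α - 1) / 12 ≤ GG α n ((⌊(n : ℝ) * x⌋₊ : ℝ) / n) := by
    intro n x hx hn hk
    have hn' : (2 : ℝ) ≤ n := by exact_mod_cast hn
    have hk' : (1 : ℝ) ≤ (⌊(n : ℝ) * x⌋₊ : ℝ) := by exact_mod_cast hk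
    have hnx : 0 ≤ (n : ℝ) * x := mul_nonneg (by linarith) hx.1.le
    have e1 : (⌊(n : ℝ) * x⌋₊ : ℝ) ≤ n * x := Nat.floor_le hnx
    have e2 : (n : ℝ) * x < ⌊(n : ℝ) * x⌋₊ + 1 := Nat.lt_floor_add_one _
    have e3 : ⌊(n : ℝ) * x⌋₊ < n := by
      rw [Nat.floor_lt hnx]; nlinarith [hx.2]
    have e3' : (⌊(n : ℝ) * x⌋₊ : ℝ) + 1 ≤ n := by exact_mod_cast e3
    refine le_trans ?_ (GG_lower α h1 n hn _ ?_ ?_)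
    · have p1 : x / 2 ≤ (⌊(n : ℝ) * x⌋₊ : ℝ) / n := by
        rw [le_div_iff₀ (by linarith)]; linarith
      have p2 : (⌊(n : ℝ) * x⌋₊ : ℝ) / n ≤ x := by
        rw [div_le_iff₀ (by linarith)]; linarith
      have : min (x / 2) (1 - x) ≤ min ((⌊(n : ℝ) * x⌋₊ : ℝ) / n) (1 - (⌊(n : ℝ) * x⌋₊ : ℝ) / n) :=
        min_le_min p1 (by linarith)
      have h0 : 0 ≤ min (x / 2) (1 - x) := le_min (by linarith [hx.1]) (by linarith [hx.2])
      have := Real.rpow_le_rpow h0 this (by linarith : 0 ≤ α - 1)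
      linarith
    · gcongr
    · rw [le_sub_iff_add_le, ← add_div, div_le_one (by linarith)]; exact e3'
  have hmpos : ∀ x ∈ Set.Ioo (0 : ℝ) 1, 0 < min (x / 2) (1 - x) := fun x hx =>
    lt_min (by linarith [hx.1]) (by linarith [hx.2])
  have hconv : ∀ x ∈ Set.Ioo (0 : ℝ) 1,
      Tendsto (fun n : ℕ => GG α n ((⌊(n : ℝ) * x⌋₊ : ℝ) / n)) atTop (𝓝 (g x)) := by
    intro x hx
    apply GG_tendsto α h1
    have := (tendsto_nat_floor_mul_div_atTop (R := ℝ) hx.1.le).comp (tendsto_natCast_atTop_atTop (R := ℝ))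
    refine this.congr fun n => ?_
    simp [mul_comm]
  have hflev : ∀ x ∈ Set.Ioo (0 : ℝ) 1, ∀ᶠ n : ℕ in atTop, 2 ≤ n ∧ 1 ≤ ⌊(n : ℝ) * x⌋₊ := by
    intro x hx
    have : Tendsto (fun n : ℕ => (n : ℝ) * x) atTop atTop :=
      tendsto_natCast_atTop_atTop.atTop_mul_const hx.1
    filter_upwards [eventually_ge_atTop 2, this.eventually_ge_atTop 1] with n a b
    exact ⟨a, Nat.le_floor (by simpa using b)⟩
  have hgpos : ∀ x ∈ Set.Ioo (0 : ℝ) 1, 0 < g x := by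
    intro x hx
    have hp := Real.rpow_pos_of_pos (hmpos x hx) (α - 1)
    have : (min (x / 2) (1 - x)) ^ (α - 1) / 12 ≤ g x := by
      refine ge_of_tendsto (hconv x hx) ?_
      filter_upwards [hflev x hx] with n hn
      exact hfl n x hx hn.1 hn.2
    linarith
  set bd : ℝ → ℝ := fun x => 12 ^ q * ((x / 2) ^ (-s) + (1 - x) ^ (-s)) with hbd
  have hmain : Tendsto (fun n : ℕ => ∫ x in (0 : ℝ)..1, f n ⌊(n : ℝ) * x⌋₊) atTop
      (𝓝 (∫ x in (0 : ℝ)..1, (g x ^ q)⁻¹)) := by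
    have hIoo : ∀ᵐ x : ℝ, x ≠ 1 := by
      simp [ae_iff]
    apply intervalIntegral.tendsto_integral_filter_of_dominated_convergence bd
    · refine Eventually.of_forall fun n => ?_
      have : Measurable fun x : ℝ => f n ⌊(n : ℝ) * x⌋₊ :=
        (measurable_from_nat (f := f n)).comp (Nat.measurable_floor.comp (measurable_const_mul _))
      exact this.aestronglyMeasurable
    · filter_upwards [eventually_ge_atTop 2] with n hn
      filter_upwards [hIoo] with x hx1 hx
      rw [Set.uIoc_of_le zero_le_one] at hx
      have hx : x ∈ Set.Ioo (0 : ℝ) 1 := ⟨hx.1, lt_of_le_of_ne hx.2 hx1⟩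
      have q1 : 0 ≤ (x / 2) ^ (-s) := Real.rpow_nonneg (by linarith [hx.1]) _
      have q2 : 0 ≤ (1 - x) ^ (-s) := Real.rpow_nonneg (by linarith [hx.2]) _
      rcases Nat.eq_zero_or_pos ⌊(n : ℝ) * x⌋₊ with h0 | h0
      · rw [h0, hf0, norm_zero]
        simp only [hbd]
        positivity
      · have hl := hfl n x hx hn h0
        have hp := Real.rpow_pos_of_pos (hmpos x hx) (α - 1)
        have hGpos : 0 < GG α n ((⌊(n : ℝ) * x⌋₊ : ℝ) / n) := by linarith
        rw [Real.norm_of_nonneg (by simp only [hf]; positivity)]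
        simp only [hf]
        calc (GG α n ((⌊(n : ℝ) * x⌋₊ : ℝ) / n) ^ q)⁻¹
            ≤ (((min (x / 2) (1 - x)) ^ (α - 1) / 12) ^ q)⁻¹ := by gcongr
          _ = 12 ^ q * (min (x / 2) (1 - x)) ^ (-s) := by
              rw [div_pow, ← Real.rpow_mul_natCast (hmpos x hx).le, ← hsdef, inv_div,
                Real.rpow_neg (hmpos x hx).le, div_eq_mul_inv]
          _ ≤ bd x := by
              simp only [hbd]
              gcongr
              rcases min_choice (x / 2) (1 - x) with h | h <;> rw [h] <;> linarith
    · have i1 : IntervalIntegrable (fun x : ℝ => x ^ (-s)) volume 0 1 :=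
        intervalIntegral.intervalIntegrable_rpow' (by linarith)
      have i2 : IntervalIntegrable (fun x : ℝ => (1 - x) ^ (-s)) volume 0 1 := by
        have := (i1.comp_sub_left 1).symm
        simpa using this
      have i3 : IntervalIntegrable (fun x : ℝ => (x / 2) ^ (-s)) volume 0 1 := by
        refine (i1.mul_const ((2 : ℝ) ^ (-s))⁻¹).congr ?_
        intro x hx
        rw [Set.uIoc_of_le zero_le_one] at hx
        simp only
        rw [Real.div_rpow hx.1.le (by norm_num), div_eq_mul_inv]
      exact (i3.add i2).const_mul _
    · filter_upwards [hIoo] with x hx1 hx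
      rw [Set.uIoc_of_le zero_le_one] at hx
      have hx : x ∈ Set.Ioo (0 : ℝ) 1 := ⟨hx.1, lt_of_le_of_ne hx.2 hx1⟩
      exact ((hconv x hx).pow q).inv₀ (pow_ne_zero _ (hgpos x hx).ne')
  have hT : Tendsto (fun n : ℕ => 1 / (n : ℝ) * ∑ k ∈ Finset.Icc 1 (n - 1),
      (GG α n ((k : ℝ) / n) ^ q)⁻¹) atTop (𝓝 (∫ x in (0 : ℝ)..1, (g x ^ q)⁻¹)) := by
    refine hmain.congr' ?_
    filter_upwards [eventually_ge_atTop 1] with n hn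
    rw [← sum_eq_integral (f n) n hn]
    congr 1
    symm
    apply Finset.sum_subset
    · intro k hk
      rw [Finset.mem_Icc] at hk
      rw [Finset.mem_range]; omega
    · intro k hk hk2
      rw [Finset.mem_range] at hk
      rw [Finset.mem_Icc] at hk2
      have : k = 0 := by omega
      rw [this]; exact hf0 n
  refine ⟨_, ?_, hT⟩
  set M := 4 * ∑' j : ℕ, (j : ℝ) ^ (-α) with hM
  have hGp : ∀ n k : ℕ, 2 ≤ n → k ∈ Finset.Icc 1 (n - 1) → 0 < GG α n ((k : ℝ) / n) := by
    intro n k hn hk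
    rw [Finset.mem_Icc] at hk
    have hn' : (0 : ℝ) < n := by positivity
    have hk1 : (1 : ℝ) ≤ k := by exact_mod_cast hk.1
    have hk2 : (k : ℝ) + 1 ≤ n := by exact_mod_cast (by omega : k + 1 ≤ n)
    refine lt_of_lt_of_le ?_ (GG_lower α h1 n hn _ ?_ ?_)
    · apply div_pos _ (by norm_num)
      apply Real.rpow_pos_of_pos
      refine lt_min (by positivity) ?_
      rw [sub_pos, div_lt_one hn']; linarith
    · gcongr
    · rw [le_sub_iff_add_le, ← add_div, div_le_one hn']; exact hk2
  have hMpos : 0 < M := lt_of_lt_of_le (hGp 2 1 le_rfl (by simp)) (GG_upper α h1 _ _)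
  have : (M ^ q)⁻¹ / 2 ≤ ∫ x in (0 : ℝ)..1, (g x ^ q)⁻¹ := by
    refine ge_of_tendsto hT ?_
    filter_upwards [eventually_ge_atTop 2] with n hn
    have hn' : (2 : ℝ) ≤ n := by exact_mod_cast hn
    have : ∑ k ∈ Finset.Icc 1 (n - 1), (M ^ q)⁻¹ ≤
        ∑ k ∈ Finset.Icc 1 (n - 1), (GG α n ((k : ℝ) / n) ^ q)⁻¹ := by
      apply Finset.sum_le_sum
      intro k hk
      have := hGp n k hn hk
      have := GG_upper α h1 n ((k : ℝ) / n)
      gcongr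
    rw [Finset.sum_const, Nat.card_Icc, nsmul_eq_mul] at this
    have hc : ((n - 1 + 1 - 1 : ℕ) : ℝ) = n - 1 := by
      rw [Nat.add_sub_cancel, Nat.cast_sub (by omega)]; simp
    rw [hc] at this
    have hp : 0 < (M ^ q)⁻¹ := by positivity
    rw [one_div, inv_mul_eq_div, le_div_iff₀ (by linarith)]
    nlinarith
  have hp : 0 < (M ^ q)⁻¹ := by positivity
  linarith

theorem Sq_eq (α : ℝ) (q n : ℕ) (hD : lam α n 0 - lam α n (n / 2) ≠ 0) :
    Sq q α n = (lam α n 0 - lam α n (n / 2)) ^ q *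
      (1 / (n : ℝ) * ∑ k ∈ Finset.Icc 1 (n - 1), (GG α n ((k : ℝ) / n) ^ q)⁻¹) := by
  unfold Sq
  rw [mul_left_comm, Finset.mul_sum (a := (lam α n 0 - lam α n (n / 2)) ^ q)]
  congr 1
  apply Finset.sum_congr rfl
  intro k _
  have : 1 - lamT α n k = GG α n ((k : ℝ) / n) / (lam α n 0 - lam α n (n / 2)) := by
    rw [← lam_sub, lamT]
    field_simp
    ring
  rw [this, zpow_neg, zpow_natCast, div_pow, inv_div, div_eq_mul_inv]

/-- for `1 < α < 3/2`, the asymptotic fidelity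
`F(α,n) = S_1(α,n)² / S_2(α,n)` converges along even `n → ∞` to a finite
strictly positive limit `F_∞(α) > 0`. -/
theorem stmt_17 (α : ℝ) (h1 : 1 < α) (h2 : α < 3 / 2) :
    ∃ Finf : ℝ, 0 < Finf ∧
      Filter.Tendsto (fun n : ℕ => (Sq 1 α (2 * n)) ^ 2 / Sq 2 α (2 * n))
        Filter.atTop (nhds Finf) := by
  obtain ⟨L1, hL1, t1⟩ := T_tendsto α h1 1 le_rfl (by push_cast; linarith)
  obtain ⟨L2, hL2, t2⟩ := T_tendsto α h1 2 (by norm_num) (by push_cast; linarith)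
  refine ⟨L1 ^ 2 / L2, by positivity, ?_⟩
  have h := (t1.pow 2).div t2 hL2.ne'
  have hd : Tendsto (fun n : ℕ => 2 * n) atTop atTop :=
    tendsto_id.const_mul_atTop' (by norm_num)
  refine (h.comp hd).congr' ?_
  filter_upwards [eventually_ge_atTop 1] with n hn
  have hn' : (1 : ℝ) ≤ n := by exact_mod_cast hn
  have hD : 0 < lam α (2 * n) 0 - lam α (2 * n) (2 * n / 2) := by
    rw [lam_sub]
    have e : (((2 * n / 2 : ℕ) : ℝ) / ((2 * n : ℕ) : ℝ)) = 1 / 2 := by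
      rw [Nat.mul_div_cancel_left _ (by norm_num)]
      push_cast
      field_simp
    rw [e]
    have hle : 1 / ((2 * n : ℕ) : ℝ) ≤ 1 / 2 := by
      push_cast
      gcongr
      linarith
    refine lt_of_lt_of_le ?_ (GG_lower α h1 (2 * n) (by omega) (1 / 2) hle (by linarith))
    apply div_pos _ (by norm_num)
    apply Real.rpow_pos_of_pos
    norm_num
  rw [Sq_eq α 1 _ hD.ne', Sq_eq α 2 _ hD.ne', pow_one, mul_pow,
    mul_div_mul_left _ _ (pow_ne_zero 2 hD.ne')]
  simp
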